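/- arXiv:2411.19800 — 2 statements merged into one kernel-verified Lean document; each statement's English description precedes it below -/
import Mathlib

section
/- Let G be a tree and let G' be a graph obtained from G by removing at most k edges. Then 0 ≤ meg(G') ≤ meg(G) + 2k. -/
open SimpleGraph

variable {V : Type*}

/-- A pair of vertices `u, v` monitors edge `e` in `G` if `u` and `v` are connected
and `e` lies on every shortest path (walk of length `G.dist u v`) between them. -/
def monitors (G : SimpleGraph V) (u v : V) (e : Sym2 V) : Prop :=
  G.Reachable u v ∧ ∀ p : G.Walk u v, p.length = G.dist u v → e ∈ p.edges

/-- `M` is a monitoring edge-geodetic set of `G`. -/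
def IsMEGSet (G : SimpleGraph V) (M : Set V) : Prop :=
  ∀ e ∈ G.edgeSet, ∃ u ∈ M, ∃ v ∈ M, monitors G u v e

/-- The monitoring edge-geodetic number: minimum size of an MEG-set. -/
noncomputable def meg (G : SimpleGraph V) : ℕ :=
  sInf {n | ∃ M : Finset V, IsMEGSet G ↑M ∧ M.card = n}

/-!
Deleting a set `s` of edges from any graph `G` turns an MEG-set `M` of `G` into one of `G - s` once
the endpoints of the edges in `s` are added. Let `u, v ∈ M` monitor a surviving edge `e`, and take a
shortest path `p` from `u` to `v`. If `p` avoids `s`, then `u, v` still monitor `e` in `G - s`.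
Otherwise `p` traverses some `xy ∈ s`, and one of the strictly closer pairs `u, x` and `y, v`
monitors `e` in `G`: shortest paths from `u` to `x` and from `y` to `v`, both avoiding `e`, would be
joined by `xy` into a shortest path from `u` to `v` avoiding `e`. Now repeat.
-/

lemma coe_biUnion_sym2_toFinset [DecidableEq V] (s : Finset (Sym2 V)) :
    (s.biUnion Sym2.toFinset : Set V) = ⋃ d ∈ (s : Set (Sym2 V)), (d : Set V) := by
  ext x
  simp

lemma card_biUnion_sym2_toFinset_le [DecidableEq V] (s : Finset (Sym2 V)) :
    (s.biUnion Sym2.toFinset).card ≤ 2 * s.card := by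
  rw [mul_comm]
  exact Finset.card_biUnion_le_card_mul _ _ _ fun d _ ↦
    (Multiset.toFinset_card_le _).trans d.card_toMultiset.le

section Monitors

variable {G H : SimpleGraph V} {u v x y : V} {e : Sym2 V}

lemma monitors_of_adj (h : G.Adj u v) : monitors G u v s(u, v) := by
  refine ⟨h.reachable, fun p hp ↦ ?_⟩
  rw [dist_eq_one_iff_adj.2 h] at hp
  cases p with
  | nil => exact (G.irrefl h).elim
  | cons _ q =>
    cases Walk.eq_of_length_eq_zero (Nat.succ.inj hp)
    exact List.mem_cons_self

lemma monitors.anti (hm : monitors G u v e) (hle : H ≤ G) (p : H.Walk u v)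
    (hp : p.length = G.dist u v) : monitors H u v e := by
  refine ⟨p.reachable, fun q hq ↦ ?_⟩
  have hdist : H.dist u v = G.dist u v :=
    ((dist_le p).trans_eq hp).antisymm (p.reachable.dist_anti hle)
  rw [← q.edges_mapLe_eq_edges hle]
  exact hm.2 _ ((q.length_mapLe hle).trans (hq.trans hdist))

lemma monitors.left_or_right_of_append (hm : monitors G u v e) {q : G.Walk u x} {h : G.Adj x y}
    {r : G.Walk y v} (hgeod : ((q.append h.toWalk).append r).length = G.dist u v)
    (hne : e ≠ s(x, y)) : monitors G u x e ∨ monitors G y v e := by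
  by_contra! hcon
  simp only [monitors, q.reachable, r.reachable, true_and, not_forall] at hcon
  obtain ⟨⟨q', hq', heq⟩, r', hr', her⟩ := hcon
  have hlen : ((q'.append h.toWalk).append r').length = G.dist u v := by
    have hle := dist_le ((q'.append h.toWalk).append r')
    have hqle := dist_le q
    have hrle := dist_le r
    simp only [Walk.length_append] at hgeod hle ⊢
    omega
  have hmem := hm.2 _ hlen
  simp [heq, her, hne] at hmem

lemma monitors.exists_deleteEdges {s : Set (Sym2 V)} {N : Set V} (hm : monitors G u v e)
    (he : e ∉ s) (hN : ⋃ d ∈ s, (d : Set V) ⊆ N) (hu : u ∈ N) (hv : v ∈ N) :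
    ∃ u' ∈ N, ∃ v' ∈ N, monitors (G.deleteEdges s) u' v' e := by
  induction hn : G.dist u v using Nat.strong_induction_on generalizing u v with
  | _ n ih =>
    obtain ⟨p, hp⟩ := hm.1.exists_walk_length_eq_dist
    by_cases hps : ∀ d ∈ p.edges, d ∉ s
    · exact ⟨u, hu, v, hv, hm.anti (G.deleteEdges_le s) (p.toDeleteEdges s hps)
        ((p.length_transfer _).trans hp)⟩
    push Not at hps
    obtain ⟨_, hd, hds⟩ := hps
    obtain ⟨d, hdp, rfl⟩ := List.mem_map.1 hd
    obtain ⟨q, r, rfl⟩ := (Walk.isSubwalk_toWalk_adj_iff_mem_darts p).2 hdp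
    have hsub : (d.edge : Set V) ⊆ N := (Set.subset_biUnion_of_mem hds).trans hN
    have hlen : q.length + 1 + r.length = G.dist u v := by simpa using hp
    rcases hm.left_or_right_of_append hp (ne_of_mem_of_not_mem hds he).symm with hm' | hm'
    · exact ih _ (by have := dist_le q; omega) hm' hu (hsub (Sym2.mem_mk_left _ _)) rfl
    · exact ih _ (by have := dist_le r; omega) hm' (hsub (Sym2.mem_mk_right _ _)) hv rfl

end Monitors

section MEGSet

variable {G : SimpleGraph V}

lemma isMEGSet_iUnion_edgeSet (G : SimpleGraph V) :
    IsMEGSet G (⋃ e ∈ G.edgeSet, (e : Set V)) := by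
  rintro ⟨u, v⟩ huv
  have hsub := Set.subset_biUnion_of_mem (u := fun e : Sym2 V ↦ (e : Set V)) huv
  exact ⟨u, hsub (Sym2.mem_mk_left u v), v, hsub (Sym2.mem_mk_right u v), monitors_of_adj huv⟩

lemma IsMEGSet.deleteEdges {M : Set V} (hM : IsMEGSet G M) (s : Set (Sym2 V)) :
    IsMEGSet (G.deleteEdges s) (M ∪ ⋃ d ∈ s, (d : Set V)) := by
  intro e he
  rw [edgeSet_deleteEdges] at he
  obtain ⟨u, hu, v, hv, hm⟩ := hM e he.1
  exact hm.exists_deleteEdges he.2 Set.subset_union_right (.inl hu) (.inl hv)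

lemma meg_le_card {M : Finset V} (hM : IsMEGSet G M) : meg G ≤ M.card :=
  Nat.sInf_le ⟨M, hM, rfl⟩

lemma exists_isMEGSet_card_eq_meg (hE : G.edgeSet.Finite) :
    ∃ M : Finset V, IsMEGSet G M ∧ M.card = meg G := by
  classical
  suffices hM : IsMEGSet G ↑(hE.toFinset.biUnion Sym2.toFinset) from
    Nat.sInf_mem (s := {n | ∃ M : Finset V, IsMEGSet G ↑M ∧ M.card = n}) ⟨_, _, hM, rfl⟩
  rw [coe_biUnion_sym2_toFinset, hE.coe_toFinset]
  exact isMEGSet_iUnion_edgeSet G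

end MEGSet

theorem tree_deleteEdges_le_general (G : SimpleGraph V) (hE : G.edgeSet.Finite)
    (s : Finset (Sym2 V)) : meg (G.deleteEdges ↑s) ≤ meg G + 2 * s.card := by
  classical
  obtain ⟨M, hM, hcard⟩ := exists_isMEGSet_card_eq_meg hE
  have hN : IsMEGSet (G.deleteEdges ↑s) ↑(M ∪ s.biUnion Sym2.toFinset) := by
    rw [Finset.coe_union, coe_biUnion_sym2_toFinset]
    exact hM.deleteEdges s
  calc meg (G.deleteEdges ↑s)
      ≤ (M ∪ s.biUnion Sym2.toFinset).card := meg_le_card hN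
    _ ≤ M.card + (s.biUnion Sym2.toFinset).card := Finset.card_union_le _ _
    _ ≤ meg G + 2 * s.card := by
        rw [hcard]
        gcongr
        exact card_biUnion_sym2_toFinset_le s

/-- Removing at most `k` edges from a tree: `0 ≤ meg G' ≤ meg G + 2k`. -/
theorem tree_deleteEdges_le [Fintype V] (G : SimpleGraph V)
    (hT : G.IsTree) (k : ℕ) (s : Finset (Sym2 V))
    (hs : ↑s ⊆ G.edgeSet) (hk : s.card ≤ k) :
    0 ≤ meg (G.deleteEdges ↑s) ∧ meg (G.deleteEdges ↑s) ≤ meg G + 2 * k := by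
  exact ⟨Nat.zero_le _, (tree_deleteEdges_le_general G G.edgeSet.toFinite s).trans (by gcongr)⟩
end

section
/- Let G be the m × n rectangular grid graph with m, n ≥ 3, and let e = uv be an edge where u is a corner vertex (degree 2) and v has degree 3. Then meg(G \ {e}) = 2(m + n − 2) − 1. -/
open SimpleGraph

variable {V : Type*}

/-! MEG-sets are built from *tracks*: sets of vertices on which a `1`-Lipschitz potential is
injective and which no step increasing it leaves. A walk between two vertices of a track whose
length is the difference of their potentials must climb along the track, so the ends of a track
monitor all of its edges. After moving the deleted edge to `(0,0)(1,0)`, the tracks are the columns,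
the rows (without `(0,0)`), and row `1` with `(0,0)` placed in front of it. Hence the boundary
without `(0,1)` is an MEG-set.

Conversely, a vertex `x` with a neighbour `y` such that each induced path `y x z` lies in a
`4`-cycle is in every MEG-set, since a geodesic through `y x z` can be rerouted around `x`. This
applies to every boundary vertex other than `(0,1)`. -/

section Monitoring

variable {W : Type*} {G : SimpleGraph V} {H : SimpleGraph W} {M : Set V} {a b x y : V}

theorem monitors.symm {e : Sym2 V} (h : monitors G a b e) : monitors G b a e := by
  refine ⟨h.1.symm, fun p hp => ?_⟩
  have := h.2 p.reverse (by rw [Walk.length_reverse, hp, dist_comm])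
  rwa [Walk.edges_reverse, List.mem_reverse] at this

theorem monitors.exists_walks (h : monitors G a b s(x, y)) :
    (∃ (q : G.Walk a x) (r : G.Walk y b), q.length + 1 + r.length = G.dist a b) ∨
      ∃ (q : G.Walk a y) (r : G.Walk x b), q.length + 1 + r.length = G.dist a b := by
  obtain ⟨p, hp⟩ := h.1.exists_walk_length_eq_dist
  have hmem := h.2 p hp
  have hxy := p.adj_of_mem_edges hmem
  rw [← hp]
  refine ((Walk.isSubwalk_toWalk_iff_mem_edges hxy).2 hmem).imp ?_ ?_ <;>
  · rintro ⟨q, r, rfl⟩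
    exact ⟨q, r, by simp⟩

theorem IsMEGSet.exists_monitors_walks (hM : IsMEGSet G M) (hxy : G.Adj x y) :
    ∃ a ∈ M, ∃ b ∈ M, monitors G a b s(x, y) ∧
      ∃ (q : G.Walk a y) (r : G.Walk x b), q.length + 1 + r.length = G.dist a b := by
  obtain ⟨a, ha, b, hb, hmon⟩ := hM s(x, y) hxy
  rcases hmon.exists_walks with ⟨q, r, hqr⟩ | ⟨q, r, hqr⟩
  · refine ⟨b, hb, a, ha, hmon.symm, r.reverse, q.reverse, ?_⟩
    rw [Walk.length_reverse, Walk.length_reverse, dist_comm]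
    omega
  · exact ⟨a, ha, b, hb, hmon, q, r, hqr⟩

theorem IsMEGSet.mem_of_forall_exists_four_cycle (hM : IsMEGSet G M) (hxy : G.Adj x y)
    (hcycle : ∀ z, G.Adj x z → z ≠ y → ¬G.Adj y z → ∃ w, w ≠ x ∧ G.Adj y w ∧ G.Adj w z) :
    x ∈ M := by
  by_contra hx
  obtain ⟨a, -, b, hb, hmon, q, r, hqr⟩ := hM.exists_monitors_walks hxy
  cases r with
  | nil => exact hx hb
  | @cons _ z _ hxz r =>
    rw [Walk.length_cons] at hqr
    have hzy : z ≠ y := by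
      rintro rfl
      have := dist_le (q.append r)
      rw [Walk.length_append] at this
      omega
    have hyz : ¬G.Adj y z := fun hyz => by
      have := dist_le (q.append (.cons hyz r))
      rw [Walk.length_append, Walk.length_cons] at this
      omega
    obtain ⟨w, hwx, hyw, hwz⟩ := hcycle z hxz hzy hyz
    have hreroute : s(x, y) ∈ (q.append (.cons hyw (.cons hwz r))).edges :=
      hmon.2 _ (by simp only [Walk.length_append, Walk.length_cons]; omega)
    have hxq : x ∉ q.support := fun hxq => by
      obtain ⟨q₁, q₂, rfl⟩ := Walk.mem_support_iff_exists_append.1 hxq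
      have := dist_le (q₁.append (.cons hxz r))
      simp only [Walk.length_append, Walk.length_cons] at this hqr
      omega
    have hxr : x ∉ r.support := fun hxr => by
      obtain ⟨r₁, r₂, rfl⟩ := Walk.mem_support_iff_exists_append.1 hxr
      have := dist_le (q.append (.cons hxy.symm r₂))
      simp only [Walk.length_append, Walk.length_cons] at this hqr
      omega
    have hsupp := Walk.fst_mem_support_of_mem_edges _ hreroute
    simp only [Walk.mem_support_append_iff, Walk.support_cons, List.mem_cons] at hsupp
    exact hsupp.elim hxq fun h => h.elim hxy.ne fun h => h.elim hwx.symm hxr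

theorem meg_eq_card {M : Finset V} (hM : IsMEGSet G (M : Set V))
    (hmin : ∀ N : Finset V, IsMEGSet G (N : Set V) → M ⊆ N) : meg G = M.card := by
  refine le_antisymm (Nat.sInf_le ⟨M, hM, rfl⟩) (le_csInf ⟨_, M, hM, rfl⟩ ?_)
  rintro _ ⟨N, hN, rfl⟩
  exact Finset.card_le_card (hmin N hN)

theorem dist_map_le_dist (f : G →g H) (h : G.Reachable a b) : H.dist (f a) (f b) ≤ G.dist a b := by
  obtain ⟨p, hp⟩ := h.exists_walk_length_eq_dist
  rw [← hp, ← Walk.length_map f p]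
  exact dist_le _

theorem monitors.map_iso {e : Sym2 V} (h : monitors G a b e) (φ : G ≃g H) :
    monitors H (φ a) (φ b) (e.map φ) := by
  refine ⟨h.1.map φ.toHom, fun p hp => ?_⟩
  let q : G.Walk a b := (p.map φ.symm.toHom).copy (φ.symm_apply_apply a) (φ.symm_apply_apply b)
  have hq : q.length = p.length := by simp [q]
  have hgeodesic : q.length = G.dist a b :=
    le_antisymm (hq.trans hp ▸ dist_map_le_dist φ.toHom h.1) (dist_le q)
  have hmem := h.2 q hgeodesic
  simp only [q, Walk.edges_copy, Walk.edges_map, List.mem_map] at hmem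
  obtain ⟨e', he', rfl⟩ := hmem
  have hmap : (Sym2.map φ.symm e').map φ = e' := by
    rw [Sym2.map_map, φ.self_comp_symm, Sym2.map_id, id]
  exact hmap.symm ▸ he'

theorem IsMEGSet.image_iso (hM : IsMEGSet G M) (φ : G ≃g H) : IsMEGSet H (φ '' M) := by
  rintro ⟨x, y⟩ hxy
  obtain ⟨a, ha, b, hb, hmon⟩ := hM s(φ.symm x, φ.symm y) (φ.symm.map_adj_iff.2 hxy)
  refine ⟨φ a, ⟨a, ha, rfl⟩, φ b, ⟨b, hb, rfl⟩, ?_⟩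
  simpa using hmon.map_iso φ

theorem exists_isMEGSet_card_eq_of_iso (φ : G ≃g H) {k : ℕ}
    (h : ∃ M : Finset V, IsMEGSet G (M : Set V) ∧ M.card = k) :
    ∃ M : Finset W, IsMEGSet H (M : Set W) ∧ M.card = k := by
  obtain ⟨M, hM, rfl⟩ := h
  refine ⟨M.map φ.toEquiv.toEmbedding, ?_, M.card_map _⟩
  rw [Finset.coe_map]
  exact hM.image_iso φ

theorem meg_congr (φ : G ≃g H) : meg G = meg H :=
  congrArg sInf <| Set.ext fun _ =>
    ⟨exists_isMEGSet_card_eq_of_iso φ, exists_isMEGSet_card_eq_of_iso φ.symm⟩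

theorem meg_deleteEdges_congr (φ : G ≃g H) (u v : V) :
    meg (G.deleteEdges {s(u, v)}) = meg (H.deleteEdges {s(φ u, φ v)}) := by
  refine meg_congr ⟨φ.toEquiv, fun {x y} => ?_⟩
  change (H.deleteEdges {s(φ u, φ v)}).Adj (φ x) (φ y) ↔ _
  have hedge : s(φ x, φ y) = s(φ u, φ v) ↔ s(x, y) = s(u, v) :=
    (Sym2.map.injective φ.injective).eq_iff (a := s(x, y)) (b := s(u, v))
  simp only [deleteEdges_adj, Set.mem_singleton_iff, φ.map_adj_iff, hedge]

end Monitoring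

/-- A *track* for the potential `f`: a set of vertices that monitors the edges it spans from its own
ends, because walks along which `f` grows as fast as possible cannot leave it. -/
structure IsTrack (G : SimpleGraph V) (f : V → ℕ) (S : Set V) : Prop where
  le_add_one : ∀ ⦃x y⦄, G.Adj x y → f y ≤ f x + 1
  injOn : S.InjOn f
  mem_of_ascent : ∀ ⦃x y⦄, x ∈ S → G.Adj x y → f y = f x + 1 → y ∈ S
  exists_ascent : ∀ ⦃x y⦄, x ∈ S → y ∈ S → f x < f y → ∃ z, G.Adj x z ∧ f z = f x + 1

namespace IsTrack

variable {G : SimpleGraph V} {f : V → ℕ} {S : Set V} {a b x y : V}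

theorem le_add_length (hS : IsTrack G f S) (p : G.Walk a b) : f b ≤ f a + p.length := by
  induction p with
  | nil => exact le_rfl
  | cons h p ih =>
    have := hS.le_add_one h
    rw [Walk.length_cons]
    omega

theorem exists_walk (hS : IsTrack G f S) (ha : a ∈ S) (hb : b ∈ S) (hab : f a ≤ f b) :
    ∃ p : G.Walk a b, p.length = f b - f a := by
  induction hk : f b - f a generalizing a with
  | zero =>
    obtain rfl := hS.injOn ha hb (by omega)
    exact ⟨.nil, rfl⟩
  | succ k ih =>
    obtain ⟨c, hac, hc⟩ := hS.exists_ascent ha hb (by omega)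
    obtain ⟨p, hp⟩ := ih (hS.mem_of_ascent ha hac hc) (by omega) (by omega)
    exact ⟨.cons hac p, congrArg (· + 1) hp⟩

theorem mem_edges (hS : IsTrack G f S) (p : G.Walk a b) (hp : p.length + f a ≤ f b) (ha : a ∈ S)
    (hx : x ∈ S) (hy : y ∈ S) (hax : f a ≤ f x) (hxy : f y = f x + 1) (hyb : f y ≤ f b) :
    s(x, y) ∈ p.edges := by
  induction p with
  | nil => omega
  | @cons a c b hac p ih =>
    rw [Walk.length_cons] at hp
    have hstep := hS.le_add_one hac
    have hrest := hS.le_add_length p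
    have hc : c ∈ S := hS.mem_of_ascent ha hac (by omega)
    rw [Walk.edges_cons, List.mem_cons]
    rcases hax.eq_or_lt with heq | hlt
    · obtain rfl := hS.injOn ha hx heq
      obtain rfl := hS.injOn hc hy (by omega)
      exact .inl rfl
    · exact .inr (ih (by omega) hc (by omega) hyb)

theorem monitors (hS : IsTrack G f S) (ha : a ∈ S) (hb : b ∈ S) (hx : x ∈ S) (hy : y ∈ S)
    (hax : f a ≤ f x) (hxy : f y = f x + 1) (hyb : f y ≤ f b) : monitors G a b s(x, y) := by
  obtain ⟨p, hp⟩ := hS.exists_walk ha hb (by omega)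
  refine ⟨⟨p⟩, fun q hq => hS.mem_edges q ?_ ha hx hy hax hxy hyb⟩
  have := dist_le p
  omega

end IsTrack

/-- The `m × n` grid, with the coordinates of its vertices counted from `0`. -/
abbrev gridGraph (m n : ℕ) : SimpleGraph (Fin m × Fin n) :=
  (pathGraph m).boxProd (pathGraph n)

section GridSymmetry

variable {m n : ℕ}

theorem eq_zero_or_succ_eq_of_degree_pathGraph_eq_one {i : Fin n}
    [Fintype ((pathGraph n).neighborSet i)] (h : (pathGraph n).degree i = 1) :
    i.val = 0 ∨ i.val + 1 = n := by
  by_contra! hi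
  obtain ⟨j, -, huniq⟩ := degree_eq_one_iff_existsUnique_adj.1 h
  have hpred := huniq ⟨i - 1, by omega⟩ (pathGraph_adj.2 (.inr (by simp only; omega)))
  have hsucc := huniq ⟨i + 1, by omega⟩ (pathGraph_adj.2 (.inl rfl))
  have := Fin.val_eq_of_eq (hpred.trans hsucc.symm)
  simp only at this
  omega

theorem corner_of_ncard_neighborSet_eq_two (hm : 2 ≤ m) (hn : 2 ≤ n) {u : Fin m × Fin n}
    (hu : ((gridGraph m n).neighborSet u).ncard = 2) :
    (u.1.val = 0 ∨ u.1.val + 1 = m) ∧ (u.2.val = 0 ∨ u.2.val + 1 = n) := by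
  classical
  have : Nontrivial (Fin m) := Fin.nontrivial_iff_two_le.2 hm
  have : Nontrivial (Fin n) := Fin.nontrivial_iff_two_le.2 hn
  have hsum : (pathGraph m).degree u.1 + (pathGraph n).degree u.2 = 2 := by
    rw [← degree_boxProd, ← card_neighborSet_eq_degree, ← hu, Set.ncard_eq_toFinset_card',
      Set.toFinset_card]
  have h₁ := (pathGraph_preconnected m).degree_pos_of_nontrivial u.1
  have h₂ := (pathGraph_preconnected n).degree_pos_of_nontrivial u.2
  exact ⟨eq_zero_or_succ_eq_of_degree_pathGraph_eq_one (by omega),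
    eq_zero_or_succ_eq_of_degree_pathGraph_eq_one (by omega)⟩

theorem exists_pathGraph_iso_apply_eq_zero {i : Fin n} (hi : i.val = 0 ∨ i.val + 1 = n) :
    ∃ φ : pathGraph n ≃g pathGraph n, (φ i).val = 0 := by
  rcases hi with hi | hi
  · exact ⟨.refl, hi⟩
  · refine ⟨⟨Fin.revPerm, fun {j k} => ?_⟩, ?_⟩
    · simp only [pathGraph_adj, Fin.revPerm_apply, Fin.val_rev]
      omega
    · change (Fin.rev i).val = 0
      rw [Fin.val_rev]
      omega

/-- The isomorphism of box products induced by isomorphisms of the factors. -/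
def boxProdCongr {α β γ δ : Type*} {G : SimpleGraph α} {H : SimpleGraph β} {G' : SimpleGraph γ}
    {H' : SimpleGraph δ} (φ : G ≃g G') (ψ : H ≃g H') : G.boxProd H ≃g G'.boxProd H' where
  toEquiv := φ.toEquiv.prodCongr ψ.toEquiv
  map_rel_iff' := by simp [φ.map_adj_iff, ψ.map_adj_iff]

theorem exists_grid_iso_apply_eq_zero {u : Fin m × Fin n} (hu₁ : u.1.val = 0 ∨ u.1.val + 1 = m)
    (hu₂ : u.2.val = 0 ∨ u.2.val + 1 = n) :
    ∃ φ : gridGraph m n ≃g gridGraph m n, (φ u).1.val = 0 ∧ (φ u).2.val = 0 := by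
  obtain ⟨φ, hφ⟩ := exists_pathGraph_iso_apply_eq_zero hu₁
  obtain ⟨ψ, hψ⟩ := exists_pathGraph_iso_apply_eq_zero hu₂
  exact ⟨boxProdCongr φ ψ, hφ, hψ⟩

end GridSymmetry

/-- The vertices of the `m × n` grid with an extreme coordinate. -/
def gridBoundary (m n : ℕ) : Finset (Fin m × Fin n) :=
  {x | x.1.val = 0 ∨ x.1.val + 1 = m ∨ x.2.val = 0 ∨ x.2.val + 1 = n}

theorem card_gridBoundary {m n : ℕ} (hm : 2 ≤ m) (hn : 2 ≤ n) :
    (gridBoundary m n).card = 2 * (m + n - 2) := by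
  obtain ⟨k, rfl⟩ := Nat.exists_eq_add_of_le' hm
  obtain ⟨l, rfl⟩ := Nat.exists_eq_add_of_le' hn
  have hcompl : (gridBoundary (k + 2) (l + 2))ᶜ =
      Finset.Ioo 0 (Fin.last (k + 1)) ×ˢ Finset.Ioo 0 (Fin.last (l + 1)) := by
    ext x
    simp only [gridBoundary, Finset.mem_compl, Finset.mem_filter_univ, Finset.mem_product,
      Finset.mem_Ioo, Fin.lt_def, Fin.val_zero, Fin.val_last]
    omega
  have hcard := (gridBoundary (k + 2) (l + 2)).card_add_card_compl
  rw [hcompl] at hcard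
  simp only [Finset.card_product, Fin.card_Ioo, Fin.val_last, Fin.val_zero, Nat.sub_zero,
    Nat.add_sub_cancel, Fintype.card_prod, Fintype.card_fin] at hcard
  have : (k + 2) * (l + 2) = 2 * (k + l + 2) + k * l := by ring
  omega

/-- The `m × n` grid without the edge between `(0, 0)` and `(1, 0)`, the only edge with both ends in
`{0, 1} × {0}`. -/
def cutGrid (m n : ℕ) : SimpleGraph (Fin m × Fin n) :=
  (gridGraph m n).deleteEdges {e | ∀ x ∈ e, x.1.val ≤ 1 ∧ x.2.val = 0}

/-- The smallest MEG-set of `cutGrid m n`: the boundary without the vertex `(0, 1)`. -/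
def cutBoundary (m n : ℕ) : Finset (Fin m × Fin n) :=
  {x ∈ gridBoundary m n | ¬(x.1.val = 0 ∧ x.2.val = 1)}

section CutGrid

variable {m n : ℕ}

theorem mem_cutBoundary {x : Fin m × Fin n} : x ∈ cutBoundary m n ↔
    (x.1.val = 0 ∨ x.1.val + 1 = m ∨ x.2.val = 0 ∨ x.2.val + 1 = n) ∧
      ¬(x.1.val = 0 ∧ x.2.val = 1) := by
  rw [cutBoundary, Finset.mem_filter, gridBoundary, Finset.mem_filter_univ]

theorem card_cutBoundary (hm : 2 ≤ m) (hn : 2 ≤ n) :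
    (cutBoundary m n).card = 2 * (m + n - 2) - 1 := by
  have herase : cutBoundary m n = (gridBoundary m n).erase (⟨0, by omega⟩, ⟨1, by omega⟩) := by
    ext x
    simp only [cutBoundary, Finset.mem_filter, Finset.mem_erase, ne_eq, Prod.ext_iff, Fin.ext_iff,
      and_comm]
  rw [herase, Finset.card_erase_of_mem (by simp [gridBoundary]), card_gridBoundary hm hn]

theorem cutGrid_adj {x y : Fin m × Fin n} : (cutGrid m n).Adj x y ↔
    (x.1.val + 1 = y.1.val ∧ x.2.val = y.2.val ∧ (x.1.val ≠ 0 ∨ x.2.val ≠ 0)) ∨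
    (y.1.val + 1 = x.1.val ∧ x.2.val = y.2.val ∧ (y.1.val ≠ 0 ∨ y.2.val ≠ 0)) ∨
    (x.1.val = y.1.val ∧ x.2.val + 1 = y.2.val) ∨ (x.1.val = y.1.val ∧ y.2.val + 1 = x.2.val) := by
  simp only [cutGrid, deleteEdges_adj, boxProd_adj, pathGraph_adj, Set.mem_ofPred_eq,
    Sym2.mem_iff, forall_eq_or_imp, forall_eq, Fin.ext_iff]
  omega

theorem deleteEdges_eq_cutGrid {u v : Fin m × Fin n} (hu₁ : u.1.val = 0) (hu₂ : u.2.val = 0)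
    (hv₁ : v.1.val = 1) (hv₂ : v.2.val = 0) :
    (gridGraph m n).deleteEdges {s(u, v)} = cutGrid m n := by
  ext x y
  simp only [cutGrid_adj, deleteEdges_adj, boxProd_adj, pathGraph_adj, Set.mem_singleton_iff,
    Sym2.eq_iff, Prod.ext_iff, Fin.ext_iff]
  omega

theorem isTrack_column (i : Fin m) : IsTrack (cutGrid m n) (fun x => x.2.val) {x | x.1 = i} where
  le_add_one x y h := by rw [cutGrid_adj] at h; omega
  injOn x hx y hy h := Prod.ext (hx.trans hy.symm) (Fin.ext h)
  mem_of_ascent x y hx h hxy := by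
    obtain rfl := hx
    rw [cutGrid_adj] at h
    exact Fin.ext (by omega)
  exists_ascent x y _ _ h := ⟨(x.1, ⟨x.2 + 1, by omega⟩), by rw [cutGrid_adj]; simp, rfl⟩

theorem isTrack_row (j : Fin n) :
    IsTrack (cutGrid m n) (fun x => x.1.val) {x | x.2 = j ∧ (x.1.val ≠ 0 ∨ x.2.val ≠ 0)} where
  le_add_one x y h := by rw [cutGrid_adj] at h; omega
  injOn x hx y hy h := Prod.ext (Fin.ext h) (hx.1.trans hy.1.symm)
  mem_of_ascent x y hx h hxy := by
    obtain ⟨rfl, -⟩ := hx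
    rw [cutGrid_adj] at h
    exact ⟨Fin.ext (by omega), by omega⟩
  exists_ascent x y hx _ h :=
    ⟨(⟨x.1 + 1, by omega⟩, x.2), cutGrid_adj.2 (.inl ⟨rfl, rfl, hx.2⟩), rfl⟩

/-- Row `1` cannot be monitored from its own end `(0, 1)`, which is missing from `cutBoundary`, so
it is extended by the pendant vertex `(0, 0)`. -/
theorem isTrack_row_one_insert_corner :
    IsTrack (cutGrid m n) (fun x => x.1.val + min x.2.val 1)
      {x | x.2.val = 1 ∨ x.1.val = 0 ∧ x.2.val = 0} where
  le_add_one x y h := by rw [cutGrid_adj] at h; omega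
  injOn x hx y hy h := by
    simp only [Set.mem_ofPred_eq] at hx hy h
    exact Prod.ext (Fin.ext (by omega)) (Fin.ext (by omega))
  mem_of_ascent x y hx h hxy := by
    rw [cutGrid_adj] at h
    simp only [Set.mem_ofPred_eq] at hx ⊢
    omega
  exists_ascent x y hx hy h := by
    simp only [Set.mem_ofPred_eq] at hx hy
    rcases hx with hx | hx
    · exact ⟨(⟨x.1 + 1, by omega⟩, x.2), by rw [cutGrid_adj]; simp [hx], by simp only; omega⟩
    · exact ⟨(x.1, y.2), by rw [cutGrid_adj]; dsimp only; omega, by simp only; omega⟩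

theorem exists_monitors_of_column_edge (hn : 3 ≤ n) {x y : Fin m × Fin n}
    (h₁ : x.1.val = y.1.val) (h₂ : x.2.val + 1 = y.2.val) :
    ∃ a ∈ cutBoundary m n, ∃ b ∈ cutBoundary m n, monitors (cutGrid m n) a b s(x, y) := by
  refine ⟨(x.1, ⟨0, by omega⟩), ?_, (x.1, ⟨n - 1, by omega⟩), ?_, (isTrack_column x.1).monitors rfl
    rfl rfl (Fin.ext h₁.symm) (Nat.zero_le _) h₂.symm (by simp only; omega)⟩ <;>
  · rw [mem_cutBoundary]
    dsimp only
    omega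

theorem exists_monitors_of_row_edge {x y : Fin m × Fin n} (h₁ : x.1.val + 1 = y.1.val)
    (h₂ : x.2.val = y.2.val) (hx : x.1.val ≠ 0 ∨ x.2.val ≠ 0) :
    ∃ a ∈ cutBoundary m n, ∃ b ∈ cutBoundary m n, monitors (cutGrid m n) a b s(x, y) := by
  by_cases hrow : x.2.val = 1
  · refine ⟨(⟨0, by omega⟩, ⟨0, by omega⟩), ?_, (⟨m - 1, by omega⟩, x.2), ?_,
      isTrack_row_one_insert_corner.monitors (.inr ⟨rfl, rfl⟩) (.inl hrow) (.inl hrow)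
        (.inl (h₂ ▸ hrow)) (Nat.zero_le _) (by omega) (by simp only; omega)⟩ <;>
    · rw [mem_cutBoundary]
      dsimp only
      omega
  · -- The row starts at `(1, 0)` if `x.2 = 0` and at `(0, x.2)` otherwise; the truncated `1 - x.2`
    -- covers both cases.
    refine ⟨(⟨1 - x.2, by omega⟩, x.2), ?_, (⟨m - 1, by omega⟩, x.2), ?_,
      (isTrack_row x.2).monitors ⟨rfl, by simp only; omega⟩ ⟨rfl, by simp only; omega⟩
        ⟨rfl, by omega⟩ ⟨Fin.ext h₂.symm, by omega⟩ (by simp only; omega) h₁.symm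
        (by simp only; omega)⟩ <;>
    · rw [mem_cutBoundary]
      dsimp only
      omega

theorem isMEGSet_cutBoundary (hn : 3 ≤ n) :
    IsMEGSet (cutGrid m n) (cutBoundary m n : Set (Fin m × Fin n)) := by
  intro e
  induction e with | _ x y
  intro hxy
  rcases cutGrid_adj.1 hxy with ⟨h₁, h₂, h⟩ | ⟨h₁, h₂, h⟩ | ⟨h₁, h₂⟩ | ⟨h₁, h₂⟩
  · exact exists_monitors_of_row_edge h₁ h₂ h
  · rw [Sym2.eq_swap]
    exact exists_monitors_of_row_edge h₁ h₂.symm h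
  · exact exists_monitors_of_column_edge hn h₁ h₂
  · rw [Sym2.eq_swap]
    exact exists_monitors_of_column_edge hn h₁.symm h₂

variable {M : Set (Fin m × Fin n)} {x : Fin m × Fin n}

theorem IsMEGSet.mem_of_row_end (hM : IsMEGSet (cutGrid m n) M) (hm : 3 ≤ m)
    (hx : x.1.val = 0 ∧ 2 ≤ x.2.val ∨ x.1.val + 1 = m) : x ∈ M := by
  obtain ⟨c, hc⟩ : ∃ c : Fin m, x.1.val = 0 ∧ c.val = 1 ∨ x.1.val + 1 = m ∧ c.val + 2 = m := by
    rcases hx with ⟨h, -⟩ | h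
    · exact ⟨⟨1, by omega⟩, .inl ⟨h, rfl⟩⟩
    · exact ⟨⟨m - 2, by omega⟩, .inr ⟨h, by simp only; omega⟩⟩
  refine hM.mem_of_forall_exists_four_cycle (y := (c, x.2)) (by rw [cutGrid_adj]; dsimp only; omega)
    fun z hz hzc _ => ⟨(c, z.2), ?_, ?_, ?_⟩
  all_goals
    simp only [cutGrid_adj, ne_eq, Prod.ext_iff, Fin.ext_iff, true_and] at hz hzc ⊢
    omega

theorem IsMEGSet.mem_of_column_end (hM : IsMEGSet (cutGrid m n) M) (hn : 3 ≤ n)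
    (hx : x.2.val = 0 ∨ x.2.val + 1 = n) : x ∈ M := by
  obtain ⟨c, hc⟩ : ∃ c : Fin n, x.2.val = 0 ∧ c.val = 1 ∨ x.2.val + 1 = n ∧ c.val + 2 = n := by
    rcases hx with h | h
    · exact ⟨⟨1, by omega⟩, .inl ⟨h, rfl⟩⟩
    · exact ⟨⟨n - 2, by omega⟩, .inr ⟨h, by simp only; omega⟩⟩
  refine hM.mem_of_forall_exists_four_cycle (y := (x.1, c)) (by rw [cutGrid_adj]; dsimp only; omega)
    fun z hz hzc _ => ⟨(z.1, c), ?_, ?_, ?_⟩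
  all_goals
    simp only [cutGrid_adj, ne_eq, Prod.ext_iff, Fin.ext_iff, true_and] at hz hzc ⊢
    omega

theorem IsMEGSet.mem_of_mem_cutBoundary (hM : IsMEGSet (cutGrid m n) M) (hm : 3 ≤ m)
    (hn : 3 ≤ n) (hx : x ∈ cutBoundary m n) : x ∈ M := by
  obtain ⟨hboundary, hne⟩ := mem_cutBoundary.1 hx
  by_cases hcolumn : x.2.val = 0 ∨ x.2.val + 1 = n
  · exact hM.mem_of_column_end hn hcolumn
  · exact hM.mem_of_row_end hm (by omega)

theorem meg_cutGrid (hm : 3 ≤ m) (hn : 3 ≤ n) : meg (cutGrid m n) = 2 * (m + n - 2) - 1 := by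
  rw [meg_eq_card (isMEGSet_cutBoundary hn) fun _ hM _ hx =>
    hM.mem_of_mem_cutBoundary hm hn hx, card_cutBoundary (by omega) (by omega)]

theorem meg_gridGraph_deleteEdges_of_origin (hm : 3 ≤ m) (hn : 3 ≤ n) {u v : Fin m × Fin n}
    (huv : (gridGraph m n).Adj u v) (hu₁ : u.1.val = 0) (hu₂ : u.2.val = 0) :
    meg ((gridGraph m n).deleteEdges {s(u, v)}) = 2 * (m + n - 2) - 1 := by
  simp only [boxProd_adj, pathGraph_adj, Fin.ext_iff] at huv
  by_cases hv : v.1.val = 1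
  · rw [deleteEdges_eq_cutGrid hu₁ hu₂ hv (by omega), meg_cutGrid hm hn]
  · rw [meg_deleteEdges_congr (boxProdComm _ _),
      deleteEdges_eq_cutGrid hu₂ hu₁ (show v.2.val = 1 by omega) (show v.1.val = 0 by omega),
      meg_cutGrid hn hm, Nat.add_comm]

end CutGrid

/-- In the `m × n` grid (`m, n ≥ 3`), removing an edge joining a corner vertex
(degree `2`) to a vertex of degree `3` gives `meg = 2(m + n - 2) - 1`. -/
theorem grid_deleteEdge_corner (m n : ℕ) (hm : 3 ≤ m) (hn : 3 ≤ n)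
    (u v : Fin m × Fin n)
    (huv : ((SimpleGraph.pathGraph m).boxProd (SimpleGraph.pathGraph n)).Adj u v)
    (hu : (((SimpleGraph.pathGraph m).boxProd (SimpleGraph.pathGraph n)).neighborSet u).ncard = 2)
    (hv : (((SimpleGraph.pathGraph m).boxProd (SimpleGraph.pathGraph n)).neighborSet v).ncard = 3) :
    meg (((SimpleGraph.pathGraph m).boxProd (SimpleGraph.pathGraph n)).deleteEdges {s(u, v)})
        = 2 * (m + n - 2) - 1 := by
  obtain ⟨hu₁, hu₂⟩ := corner_of_ncard_neighborSet_eq_two (by omega) (by omega) hu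
  obtain ⟨φ, hφ₁, hφ₂⟩ := exists_grid_iso_apply_eq_zero hu₁ hu₂
  rw [meg_deleteEdges_congr φ]
  exact meg_gridGraph_deleteEdges_of_origin hm hn (φ.map_adj_iff.2 huv) hφ₁ hφ₂
end
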